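/- arXiv:1509.07312 — 4 statements merged into one kernel-verified Lean document; each statement's English description precedes it below -/
import Mathlib

section
/- Let Q be a quantum matrix of size m. Call a nonempty subset S ⊆ Fin m maximal rank-one if the principal submatrix Q(S) has rank 1 and S is maximal (with respect to inclusion) among nonempty subsets whose principal submatrix has rank 1. Then: (a) the point cone V_Q is the union of the coordinate subspaces L_S over all maximal rank-one subsets S; and (b) for every maximal rank-one subset S, L_S is not contained in the union of the L_T over all maximal rank-one subsets T ≠ S. (Thus the L_S for S maximal rank-one are exactly the irreducible components of the point variety.) -/
/-- A quantum matrix of size `m`: all entries nonzero, diagonal entries `1`,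
and `Q i j * Q j i = 1` for all `i, j`. -/
def IsQuantumMatrix {m : ℕ} (Q : Matrix (Fin m) (Fin m) ℂ) : Prop :=
  (∀ i j, Q i j ≠ 0) ∧ (∀ i, Q i i = 1) ∧ (∀ i j, Q i j * Q j i = 1)

/-- The point cone of a quantum matrix `Q`. -/
def pointCone {m : ℕ} (Q : Matrix (Fin m) (Fin m) ℂ) : Set (Fin m → ℂ) :=
  {u | u ≠ 0 ∧ ∀ i j k : Fin m, i < j → j < k →
    (Q i j * Q j k - Q i k) * u i * u j * u k = 0}

/-- The (punctured) coordinate subspace of `ℂ^m` supported on `S`. -/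
def coordSubspace {m : ℕ} (S : Set (Fin m)) : Set (Fin m → ℂ) :=
  {u | u ≠ 0 ∧ ∀ i, i ∉ S → u i = 0}

/-- The principal submatrix of `Q` with rows and columns indexed by `S`. -/
def principalSubmatrix {m : ℕ} (Q : Matrix (Fin m) (Fin m) ℂ) (S : Finset (Fin m)) :
    Matrix {x : Fin m // x ∈ S} {x : Fin m // x ∈ S} ℂ :=
  Q.submatrix (fun i => i.1) (fun j => j.1)

/-- `S` is a maximal rank-one subset for `Q`: `S` is nonempty, the principal
submatrix `Q(S)` has rank 1, and `S` is maximal with these properties. -/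
def MaxRankOne {m : ℕ} (Q : Matrix (Fin m) (Fin m) ℂ) (S : Finset (Fin m)) : Prop :=
  S.Nonempty ∧ (principalSubmatrix Q S).rank = 1 ∧
    ∀ T : Finset (Fin m), T.Nonempty → (principalSubmatrix Q T).rank = 1 → S ⊆ T → S = T

/-- For a nonempty `S`, `Q(S)` has rank one iff `Q` is multiplicative on triples of `S`. -/
theorem rank_one_iff_cocycle {m : ℕ} (Q : Matrix (Fin m) (Fin m) ℂ) (hQ : IsQuantumMatrix Q)
    (S : Finset (Fin m)) (hS : S.Nonempty) :
    (principalSubmatrix Q S).rank = 1 ↔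
      ∀ i ∈ S, ∀ j ∈ S, ∀ k ∈ S, Q i j * Q j k = Q i k := by
  obtain ⟨h0, h1, h2⟩ := hQ
  constructor
  · intro h i hi j hj k hk
    rw [Matrix.rank_eq_finrank_span_cols, finrank_eq_one_iff'] at h
    obtain ⟨v, -, hv⟩ := h
    have key : ∀ l : {x : Fin m // x ∈ S}, ∃ c : ℂ, ∀ r : {x : Fin m // x ∈ S},
        c * v.1 r = Q r.1 l.1 := by
      intro l
      obtain ⟨c, hc⟩ := hv ⟨(principalSubmatrix Q S).col l, Submodule.subset_span ⟨l, rfl⟩⟩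
      refine ⟨c, fun r => ?_⟩
      have := congrFun (congrArg Subtype.val hc) r
      exact this
    obtain ⟨c, hc⟩ := key ⟨j, hj⟩
    obtain ⟨d, hd⟩ := key ⟨k, hk⟩
    have e1 := hc ⟨i, hi⟩
    have e2 := hc ⟨j, hj⟩
    have e3 := hd ⟨i, hi⟩
    have e4 := hd ⟨j, hj⟩
    simp only [h1] at e1 e2 e3 e4
    rw [← e1, ← e3, ← e4]
    linear_combination (d * v.1 ⟨i, hi⟩) * e2
  · intro h
    obtain ⟨a, ha⟩ := hS
    have e : principalSubmatrix Q S = Matrix.vecMulVec (fun i => Q i.1 a) (fun k => Q a k.1) := by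
      ext i k
      simp only [principalSubmatrix, Matrix.submatrix_apply, Matrix.vecMulVec_apply]
      exact (h i.1 i.2 a ha k.1 k.2).symm
    have hle : (principalSubmatrix Q S).rank ≤ 1 := by
      rw [e]; exact Matrix.rank_vecMulVec_le _ _
    have hne : (principalSubmatrix Q S).rank ≠ 0 := by
      intro hz
      rw [Matrix.rank_eq_finrank_span_cols, Submodule.finrank_eq_zero, Submodule.span_eq_bot] at hz
      have := congrFun (hz _ ⟨⟨a, ha⟩, rfl⟩) ⟨a, ha⟩
      simp [principalSubmatrix, h1] at this
    omega

/-- The cocycle condition on increasing triples implies it on all triples. -/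
theorem cocycle_of_sorted {m : ℕ} (Q : Matrix (Fin m) (Fin m) ℂ) (hQ : IsQuantumMatrix Q)
    (S : Finset (Fin m))
    (h : ∀ i ∈ S, ∀ j ∈ S, ∀ k ∈ S, i < j → j < k → Q i j * Q j k = Q i k) :
    ∀ i ∈ S, ∀ j ∈ S, ∀ k ∈ S, Q i j * Q j k = Q i k := by
  obtain ⟨h0, h1, h2⟩ := hQ
  intro i hi j hj k hk
  have a1 := h2 i j
  have a2 := h2 j k
  have a3 := h2 i k
  rcases lt_trichotomy i j with hij | rfl | hij
  · rcases lt_trichotomy j k with hjk | rfl | hjk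
    · exact h i hi j hj k hk hij hjk
    · rw [h1, mul_one]
    · rcases lt_trichotomy i k with hik | rfl | hik
      · have e := h i hi k hk j hj hik hjk
        linear_combination (-Q j k) * e + Q i k * a2
      · rw [h1, a1]
      · have e := h k hk i hi j hj hik hij
        linear_combination (-Q i j * Q j k) * a3 + (Q j k * Q i k) * e + Q i k * a2
  · rw [h1, one_mul]
  · rcases lt_trichotomy j k with hjk | rfl | hjk
    · rcases lt_trichotomy i k with hik | rfl | hik
      · have e := h j hj i hi k hk hij hik
        linear_combination (-Q i j) * e + Q i k * a1
      · rw [h1, a1]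
      · have e := h j hj k hk i hi hjk hik
        linear_combination (-Q i j * Q j k) * a3 + (Q i j * Q i k) * e + Q i k * a1
    · rw [h1, mul_one]
    · have e := h k hk j hj i hi hjk hij
      linear_combination (-Q i j * Q j k) * a3 + (Q i j * Q j k * Q i k) * (- e)
        + Q i k * (Q j k * Q k j * a1 + a2)

/-- Every rank-one subset is contained in a maximal one. -/
theorem exists_maxRankOne {m : ℕ} (Q : Matrix (Fin m) (Fin m) ℂ) (S : Finset (Fin m))
    (hS : S.Nonempty) (hr : (principalSubmatrix Q S).rank = 1) :
    ∃ T, MaxRankOne Q T ∧ S ⊆ T := by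
  obtain ⟨T, hST, hT⟩ := Set.Finite.exists_le_maximal
    (Set.toFinite {T : Finset (Fin m) | T.Nonempty ∧ (principalSubmatrix Q T).rank = 1})
    (show S ∈ _ from ⟨hS, hr⟩)
  refine ⟨T, ⟨hT.1.1, hT.1.2, fun U hU hUr hTU => ?_⟩, hST⟩
  exact le_antisymm hTU (hT.2 ⟨hU, hUr⟩ hTU)

theorem stmt_4 {m : ℕ} (Q : Matrix (Fin m) (Fin m) ℂ) (hQ : IsQuantumMatrix Q) :
    (pointCone Q = ⋃ S ∈ {S : Finset (Fin m) | MaxRankOne Q S},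
        coordSubspace (↑S : Set (Fin m))) ∧
    ∀ S : Finset (Fin m), MaxRankOne Q S →
      ¬ (coordSubspace (↑S : Set (Fin m)) ⊆
          ⋃ T ∈ {T : Finset (Fin m) | MaxRankOne Q T ∧ T ≠ S},
            coordSubspace (↑T : Set (Fin m))) := by
  classical
  constructor
  · ext u
    simp only [Set.mem_iUnion, Set.mem_ofPred_eq, exists_prop]
    constructor
    · rintro ⟨hu, h⟩
      have hne : (Finset.univ.filter fun i => u i ≠ 0).Nonempty := by
        obtain ⟨i, hi⟩ := Function.ne_iff.mp hu
        exact ⟨i, by simpa using hi⟩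
      have hr := (rank_one_iff_cocycle Q hQ _ hne).2 (cocycle_of_sorted Q hQ _ (by
        intro i hi j hj k hk hij hjk
        simp only [Finset.mem_filter, Finset.mem_univ, true_and] at hi hj hk
        have := h i j k hij hjk
        simp only [mul_eq_zero, hi, hj, hk, or_false] at this
        exact sub_eq_zero.mp this))
      obtain ⟨T, hT, hST⟩ := exists_maxRankOne Q _ hne hr
      refine ⟨T, hT, hu, fun i hi => ?_⟩
      by_contra hc
      exact hi (hST (by simpa using hc))
    · rintro ⟨S, hS, hu, h⟩
      have hc := (rank_one_iff_cocycle Q hQ S hS.1).1 hS.2.1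
      refine ⟨hu, fun i j k _ _ => ?_⟩
      by_cases hi : i ∈ S
      · by_cases hj : j ∈ S
        · by_cases hk : k ∈ S
          · rw [hc i hi j hj k hk]; ring
          · rw [h k (by simpa using hk)]; ring
        · rw [h j (by simpa using hj)]; ring
      · rw [h i (by simpa using hi)]; ring
  · intro S hS hsub
    have hmem : (fun i => if i ∈ S then (1 : ℂ) else 0) ∈
        coordSubspace (↑S : Set (Fin m)) := by
      refine ⟨?_, fun i hi => if_neg (by simpa using hi)⟩
      obtain ⟨a, ha⟩ := hS.1
      intro hz
      have := congrFun hz a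
      simp [ha] at this
    have h := hsub hmem
    simp only [Set.mem_iUnion, Set.mem_ofPred_eq, exists_prop] at h
    obtain ⟨T, ⟨hT, hne⟩, -, hz⟩ := h
    refine hne (hS.2.2 T hT.1 hT.2.1 fun i hi => ?_).symm
    by_contra hc
    have := hz i (by simpa using hc)
    simp [hi] at this
end

section
/- There are exactly 314 adequate collections of 3-element subsets of Fin 5. -/
/-- A collection `C` of 3-element subsets of `Fin m` is adequate if for every
`i : Fin m` and every `T ∈ C` there is a 2-element subset `S ⊆ T` with `i ∉ S`
and `S ∪ {i} ∈ C`. -/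
def Adequate {m : ℕ} (C : Finset (Finset (Fin m))) : Prop :=
  ∀ i : Fin m, ∀ T ∈ C, ∃ S : Finset (Fin m),
    S ⊆ T ∧ S.card = 2 ∧ i ∉ S ∧ insert i S ∈ C

/-- The ten triples of `Fin 5`. -/
def tri : Fin 10 → Finset (Fin 5) :=
  ![{0, 1, 2}, {0, 1, 3}, {0, 1, 4}, {0, 2, 3}, {0, 2, 4}, {0, 3, 4}, {1, 2, 3}, {1, 2, 4}, {1, 3, 4}, {2, 3, 4}]

/-- `tri j` is obtained from a pair inside `tri k` by adding `i`. -/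
def Nb (i : Fin 5) (k j : Fin 10) : Prop := i ∈ tri j ∧ (tri j).erase i ⊆ tri k

instance (i : Fin 5) (k j : Fin 10) : Decidable (Nb i k j) := by unfold Nb; infer_instance

/-- The exchange clauses `k → j₁ ∨ j₂ ∨ j₃`. -/
def clauses : List (Fin 10 × List (Fin 10)) :=
  [(0, [1, 3, 6]),
   (0, [2, 4, 7]),
   (1, [0, 3, 6]),
   (1, [2, 5, 8]),
   (2, [0, 4, 7]),
   (2, [1, 5, 8]),
   (3, [0, 1, 6]),
   (3, [4, 5, 9]),
   (4, [0, 2, 7]),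
   (4, [3, 5, 9]),
   (5, [1, 2, 8]),
   (5, [3, 4, 9]),
   (6, [0, 1, 3]),
   (6, [7, 8, 9]),
   (7, [0, 2, 4]),
   (7, [6, 8, 9]),
   (8, [1, 2, 5]),
   (8, [6, 7, 9]),
   (9, [3, 4, 5]),
   (9, [6, 7, 8])]

theorem tri_inj : Function.Injective tri := by decide +kernel

theorem tri_surj : ∀ T : Finset (Fin 5), T.card = 3 → ∃ k, tri k = T := by decide +kernel

theorem tri_card : ∀ k, (tri k).card = 3 := by decide +kernel

theorem clauses_complete : ∀ i k, i ∈ tri k ∨ ∃ c ∈ clauses, c.1 = k ∧ ∀ j ∈ c.2, Nb i k j := by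
  decide +kernel

theorem clauses_sound : ∀ c ∈ clauses, ∃ i, ∀ j, Nb i c.1 j → j ∈ c.2 := by
  decide +kernel

/-- Boolean test of all clauses. -/
def chk (f : Fin 10 → Bool) : Bool :=
  clauses.all fun c => !(f c.1) || c.2.any f

theorem adequate_iff (C : Finset (Finset (Fin 5))) (hC : ∀ T ∈ C, T.card = 3) :
    Adequate C ↔ chk (fun k => decide (tri k ∈ C)) = true := by
  have key : chk (fun k => decide (tri k ∈ C)) = true ↔
      ∀ c ∈ clauses, tri c.1 ∈ C → ∃ j ∈ c.2, tri j ∈ C := by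
    unfold chk
    rw [List.all_eq_true]
    refine forall₂_congr fun c _ => ?_
    by_cases h : tri c.1 ∈ C <;> simp [h]
  rw [key]
  constructor
  · intro hA c hc hk
    obtain ⟨i, hi⟩ := clauses_sound c hc
    obtain ⟨S, hST, -, hiS, hmem⟩ := hA i _ hk
    obtain ⟨j, hj⟩ := tri_surj _ (hC _ hmem)
    refine ⟨j, hi j ⟨?_, ?_⟩, hj ▸ hmem⟩
    · rw [hj]; exact Finset.mem_insert_self _ _
    · rw [hj, Finset.erase_insert hiS]; exact hST
  · intro h i T hT
    obtain ⟨k, rfl⟩ := tri_surj T (hC T hT)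
    have : ∃ j, Nb i k j ∧ tri j ∈ C := by
      rcases clauses_complete i k with hik | ⟨c, hc, rfl, hn⟩
      · exact ⟨k, ⟨hik, Finset.erase_subset _ _⟩, hT⟩
      · obtain ⟨j, hj, hjC⟩ := h c hc hT
        exact ⟨j, hn j hj, hjC⟩
    obtain ⟨j, ⟨hij, hsub⟩, hjC⟩ := this
    refine ⟨(tri j).erase i, hsub, ?_, Finset.notMem_erase _ _, ?_⟩
    · rw [Finset.card_erase_of_mem hij, tri_card]
    · rwa [Finset.insert_erase hij]

/-- Collections of triples as Boolean vectors. -/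
def collEquiv : {C : Finset (Finset (Fin 5)) // (∀ T ∈ C, T.card = 3) ∧ Adequate C} ≃
    {f : Fin 10 → Bool // chk f = true} where
  toFun C := ⟨fun k => decide (tri k ∈ C.1), (adequate_iff C.1 C.2.1).1 C.2.2⟩
  invFun f := ⟨(Finset.univ.filter fun k => f.1 k = true).image tri, by
    have h1 : ∀ T ∈ (Finset.univ.filter fun k => f.1 k = true).image tri, T.card = 3 := by
      intro T hT
      obtain ⟨k, -, rfl⟩ := Finset.mem_image.1 hT
      exact tri_card k
    refine ⟨h1, (adequate_iff _ h1).2 ?_⟩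
    convert f.2 using 2
    funext k
    simp [tri_inj.eq_iff]⟩
  left_inv C := by
    apply Subtype.ext
    ext T
    simp only [Finset.mem_image, Finset.mem_filter, Finset.mem_univ, true_and, decide_eq_true_eq]
    constructor
    · rintro ⟨k, hk, rfl⟩; exact hk
    · intro hT
      obtain ⟨k, rfl⟩ := tri_surj T (C.2.1 T hT)
      exact ⟨k, hT, rfl⟩
  right_inv f := by
    apply Subtype.ext
    funext k
    simp [tri_inj.eq_iff]

/-- Recursive count of satisfying Boolean vectors. -/
def cnt : (n : ℕ) → ((Fin n → Bool) → Bool) → ℕ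
  | 0, p => bif p Fin.elim0 then 1 else 0
  | n + 1, p => cnt n (fun f => p (Fin.cons true f)) + cnt n (fun f => p (Fin.cons false f))

theorem card_eq_cnt : ∀ (n : ℕ) (p : (Fin n → Bool) → Bool),
    Nat.card {f : Fin n → Bool // p f = true} = cnt n p
  | 0, p => by
    have h : ∀ f : Fin 0 → Bool, f = Fin.elim0 := fun f => Subsingleton.elim _ _
    cases hp : p Fin.elim0
    · have : IsEmpty {f : Fin 0 → Bool // p f = true} :=
        ⟨fun f => by have := f.2; rw [h f.1, hp] at this; cases this⟩
      simp [cnt, hp]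
    · have : Unique {f : Fin 0 → Bool // p f = true} :=
        ⟨⟨⟨Fin.elim0, hp⟩⟩, fun f => Subtype.ext (Subsingleton.elim _ _)⟩
      simp [cnt, hp]
  | n + 1, p => by
    rw [cnt, ← card_eq_cnt n, ← card_eq_cnt n, ← Nat.card_sum]
    refine Nat.card_congr
      { toFun := fun f => if h : f.1 0 = true
          then Sum.inl ⟨Fin.tail f.1, by
            have := f.2; rwa [← Fin.cons_self_tail f.1, h] at this⟩
          else Sum.inr ⟨Fin.tail f.1, by
            have := f.2
            rwa [← Fin.cons_self_tail f.1, Bool.eq_false_iff.2 h] at this⟩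
        invFun := Sum.elim (fun g => ⟨Fin.cons true g.1, g.2⟩) (fun g => ⟨Fin.cons false g.1, g.2⟩)
        left_inv := ?_
        right_inv := ?_ }
    · intro f
      apply Subtype.ext
      by_cases h : f.1 0 = true
      · beta_reduce
        rw [dif_pos h]
        have e := Fin.cons_self_tail f.1
        rw [h] at e
        exact e
      · beta_reduce
        rw [dif_neg h]
        have e := Fin.cons_self_tail f.1
        rw [Bool.eq_false_iff.2 h] at e
        exact e
    · rintro (g | g) <;> simp

theorem cnt_chk : cnt 10 chk = 314 := by decide +kernel

theorem stmt_11 :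
    Nat.card {C : Finset (Finset (Fin 5)) //
      (∀ T ∈ C, T.card = 3) ∧ Adequate C} = 314 := by
  rw [Nat.card_congr collEquiv, card_eq_cnt, cnt_chk]
end

section
/- Consider the natural action of the symmetric group on Fin 5 on collections of 3-element subsets of Fin 5 (a permutation σ sends a collection C to the collection of images σ(T) for T ∈ C; this action preserves adequacy). The number of orbits of this action on the set of adequate collections of 3-element subsets of Fin 5 is exactly 16. -/
namespace Orb

/-- The list of triples. -/
def tl : List (Finset (Fin 5)) := [{0,1,2}, {0,1,3}, {0,1,4}, {0,2,3}, {0,2,4}, {0,3,4}, {1,2,3}, {1,2,4}, {1,3,4}, {2,3,4}]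

def t (i : ℕ) : Finset (Fin 5) := tl.getD i ∅

/-- The collection encoded by a bitmask. -/
def dec (n : ℕ) : Finset (Finset (Fin 5)) :=
  ((Finset.range 10).filter (fun i => n.testBit i = true)).image t

def act (p : List ℕ) (n : ℕ) : ℕ :=
  (List.range 10).foldr (fun i acc => bif n.testBit i then acc ||| 2 ^ (p.getD i 0) else acc) 0

/-- Transpositions with their action on triples. -/
def lv : List (List (Fin 5 × Fin 5 × List ℕ)) := [
  [(0, 0, [0, 1, 2, 3, 4, 5, 6, 7, 8, 9]), (0, 1, [0, 1, 2, 6, 7, 8, 3, 4, 5, 9]), (0, 2, [0, 6, 7, 3, 4, 9, 1, 2, 8, 5]), (0, 3, [6, 1, 8, 3, 9, 5, 0, 7, 2, 4]), (0, 4, [7, 8, 2, 9, 4, 5, 6, 0, 1, 3])],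
  [(1, 1, [0, 1, 2, 3, 4, 5, 6, 7, 8, 9]), (1, 2, [0, 3, 4, 1, 2, 5, 6, 7, 9, 8]), (1, 3, [3, 1, 5, 0, 4, 2, 6, 9, 8, 7]), (1, 4, [4, 5, 2, 3, 0, 1, 9, 7, 8, 6])],
  [(2, 2, [0, 1, 2, 3, 4, 5, 6, 7, 8, 9]), (2, 3, [1, 0, 2, 3, 5, 4, 6, 8, 7, 9]), (2, 4, [2, 1, 0, 5, 4, 3, 8, 7, 6, 9])],
  [(3, 3, [0, 1, 2, 3, 4, 5, 6, 7, 8, 9]), (3, 4, [0, 2, 1, 4, 3, 5, 7, 6, 8, 9])]]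

def masks : List (List ℕ) := [
  [1, 2, 4, 8, 16, 32, 11, 21, 38, 56],
  [1, 2, 4, 67, 133, 262, 64, 128, 256, 448],
  [1, 73, 145, 8, 16, 536, 64, 128, 704, 512],
  [74, 2, 290, 8, 552, 32, 64, 832, 256, 512],
  [148, 292, 4, 560, 16, 32, 896, 128, 256, 512]]

def mask (i k : ℕ) : ℕ := (masks.getD i []).getD k 0

def adq (n : ℕ) : Bool :=
  (List.range 5).all fun i => (List.range 10).all fun k =>
    bif n.testBit k then !(Nat.beq (n &&& mask i k) 0) else true

def reps : List ℕ := [0, 7, 30, 31, 63, 222, 223, 235, 236, 237, 239, 254, 255, 507, 511, 1023]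

def srch : List (List (Fin 5 × Fin 5 × List ℕ)) → ℕ → Bool
  | [], n => reps.any (Nat.beq n)
  | l :: ls, n => l.any fun g => srch ls (act g.2.2 n)

def R (C C' : Finset (Finset (Fin 5))) : Prop :=
  ∃ σ : Equiv.Perm (Fin 5), C.image (fun T => T.image σ) = C'

def J (C : Finset (Finset (Fin 5))) : ℕ :=
  ∑ x : Fin 5, ∑ y : Fin 5, (C.filter (fun T => x ∈ T ∧ y ∈ T)).card ^ 3

theorem main_search : ((List.range 1024).all fun n => bif adq n then srch lv n else true) = true := by
  decide +kernel

theorem J_nodup : (reps.map fun n => J (dec n)).Nodup := by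
  decide +kernel

theorem t_card : ∀ i < 10, (t i).card = 3 := by decide +kernel

theorem t_surj : ∀ T : Finset (Fin 5), T.card = 3 → ∃ i < 10, t i = T := by decide +kernel

theorem t_inj : ∀ i < 10, ∀ j < 10, t i = t j → i = j := by decide +kernel

theorem lv_spec : ∀ l ∈ lv, ∀ g ∈ l, ∀ i < 10, g.2.2.getD i 0 < 10 ∧
    (t i).image (Equiv.swap g.1 g.2.1) = t (g.2.2.getD i 0) := by decide +kernel

theorem mask_spec : ∀ i : Fin 5, ∀ k < 10, ∀ j < 10,
    (i ∈ t j ∧ (t j).erase i ⊆ t k) → (mask i k).testBit j = true := by decide +kernel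

theorem mem_dec {n : ℕ} {T : Finset (Fin 5)} :
    T ∈ dec n ↔ ∃ i < 10, n.testBit i = true ∧ t i = T := by
  simp [dec, and_assoc]

theorem t_mem_dec {n k : ℕ} (hk : k < 10) : t k ∈ dec n ↔ n.testBit k = true := by
  rw [mem_dec]
  constructor
  · rintro ⟨i, hi, h, e⟩
    rwa [← t_inj i hi k hk e]
  · exact fun h => ⟨k, hk, h, rfl⟩

theorem adequate_iff (n : ℕ) : Adequate (dec n) ↔ ∀ i : Fin 5, ∀ k < 10, n.testBit k = true →
    ∃ j < 10, n.testBit j = true ∧ i ∈ t j ∧ (t j).erase i ⊆ t k := by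
  constructor
  · intro h i k hk hn
    obtain ⟨S, hS, -, hi, hm⟩ := h i (t k) ((t_mem_dec hk).2 hn)
    obtain ⟨j, hj, hb, e⟩ := mem_dec.1 hm
    refine ⟨j, hj, hb, ?_, ?_⟩
    · rw [e]; simp
    · rw [e, Finset.erase_insert hi]; exact hS
  · intro h i T hT
    obtain ⟨k, hk, hn, rfl⟩ := mem_dec.1 hT
    obtain ⟨j, hj, hb, hi, hs⟩ := h i k hk hn
    refine ⟨(t j).erase i, hs, ?_, by simp, ?_⟩
    · rw [Finset.card_erase_of_mem hi, t_card j hj]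
    · rw [Finset.insert_erase hi]; exact (t_mem_dec hj).2 hb

theorem adq_of {n : ℕ} (h : Adequate (dec n)) : adq n = true := by
  rw [adequate_iff] at h
  simp only [adq, List.all_eq_true, List.mem_range]
  intro i hi k hk
  cases hb : n.testBit k with
  | false => rfl
  | true =>
    obtain ⟨j, hj, h1, h2⟩ := h ⟨i, hi⟩ k hk hb
    have h3 := mask_spec ⟨i, hi⟩ k hk j hj h2
    have h4 : (n &&& mask i k).testBit j = true := by
      rw [Nat.testBit_and, h1, h3]; rfl
    have h5 : n &&& mask i k ≠ 0 := by
      intro h0; rw [h0] at h4; simp at h4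
    have h6 : Nat.beq (n &&& mask i k) 0 = false := by
      cases hq : Nat.beq (n &&& mask i k) 0 with
      | false => rfl
      | true => exact absurd (Nat.eq_of_beq_eq_true hq) h5
    rw [cond_true]
    simp only [h6, Bool.not_false]

theorem reps_adequate : ∀ n ∈ reps, ∀ i : Fin 5, ∀ k < 10, n.testBit k = true →
    ∃ j < 10, n.testBit j = true ∧ i ∈ t j ∧ (t j).erase i ⊆ t k := by decide +kernel

theorem R_refl (C : Finset (Finset (Fin 5))) : R C C := ⟨1, by simp⟩

theorem R_trans {A B C : Finset (Finset (Fin 5))} : R A B → R B C → R A C := by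
  rintro ⟨s, rfl⟩ ⟨u, rfl⟩
  refine ⟨u * s, ?_⟩
  rw [Finset.image_image]
  congr 1
  funext T
  simp [Finset.image_image, Function.comp_def]

theorem foldr_testBit (p : List ℕ) (n j : ℕ) (l : List ℕ) :
    (l.foldr (fun i acc => bif n.testBit i then acc ||| 2 ^ (p.getD i 0) else acc) 0).testBit j
      = true ↔ ∃ i ∈ l, n.testBit i = true ∧ p.getD i 0 = j := by
  induction l with
  | nil => simp
  | cons a l ih =>
    rw [List.foldr_cons]
    cases hb : n.testBit a with
    | false => rw [cond_false, ih]; simp [hb]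
    | true =>
      rw [cond_true, Nat.testBit_or, Bool.or_eq_true, ih, Nat.testBit_two_pow]
      simp only [List.mem_cons, exists_eq_or_imp, hb, true_and, decide_eq_true_eq]
      exact or_comm

theorem act_testBit (p : List ℕ) (n j : ℕ) :
    (act p n).testBit j = true ↔ ∃ i < 10, n.testBit i = true ∧ p.getD i 0 = j := by
  rw [act, foldr_testBit]; simp

theorem R_act {l : List (Fin 5 × Fin 5 × List ℕ)} (hl : l ∈ lv) {g : Fin 5 × Fin 5 × List ℕ}
    (hg : g ∈ l) (n : ℕ) : R (dec n) (dec (act g.2.2 n)) := by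
  refine ⟨Equiv.swap g.1 g.2.1, ?_⟩
  ext T
  rw [Finset.mem_image, mem_dec]
  constructor
  · rintro ⟨U, hU, rfl⟩
    obtain ⟨i, hi, hb, rfl⟩ := mem_dec.1 hU
    have h := lv_spec l hl g hg i hi
    exact ⟨_, h.1, (act_testBit _ _ _).2 ⟨i, hi, hb, rfl⟩, h.2.symm⟩
  · rintro ⟨j, hj, hb, rfl⟩
    obtain ⟨i, hi, hc, rfl⟩ := (act_testBit _ _ _).1 hb
    exact ⟨t i, (t_mem_dec hi).2 hc, (lv_spec l hl g hg i hi).2⟩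

theorem srch_spec (ls : List (List (Fin 5 × Fin 5 × List ℕ))) : (∀ l ∈ ls, l ∈ lv) → ∀ n : ℕ,
    srch ls n = true → ∃ r ∈ reps, R (dec n) (dec r) := by
  induction ls with
  | nil =>
    intro _ n h
    simp only [srch, List.any_eq_true] at h
    obtain ⟨r, hr, e⟩ := h
    exact ⟨r, hr, Nat.eq_of_beq_eq_true e ▸ R_refl _⟩
  | cons l ls ih =>
    intro hl n h
    simp only [srch, List.any_eq_true] at h
    obtain ⟨g, hg, e⟩ := h
    obtain ⟨r, hr, e⟩ := ih (fun l h => hl l (List.mem_cons_of_mem _ h)) _ e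
    exact ⟨r, hr, R_trans (R_act (hl l List.mem_cons_self) hg n) e⟩

theorem exists_dec (C : Finset (Finset (Fin 5))) (hC : ∀ T ∈ C, T.card = 3) :
    ∃ n < 1024, dec n = C := by
  classical
  let n : ℕ := Nat.ofBits (fun i : Fin 10 => decide (t i ∈ C))
  refine ⟨n, Nat.ofBits_lt_two_pow _, ?_⟩
  have hb : ∀ i < 10, (n.testBit i = true ↔ t i ∈ C) := by
    intro i hi
    simp only [n]
    rw [Nat.testBit_ofBits_lt _ _ hi]
    simp
  ext T
  rw [mem_dec]
  constructor
  · rintro ⟨i, hi, h, rfl⟩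
    exact (hb i hi).1 h
  · intro h
    obtain ⟨i, hi, rfl⟩ := t_surj T (hC T h)
    exact ⟨i, hi, (hb i hi).2 h, rfl⟩

theorem exists_rep (C : Finset (Finset (Fin 5))) (hC : ∀ T ∈ C, T.card = 3) (hA : Adequate C) :
    ∃ r ∈ reps, R (dec r) C := by
  obtain ⟨n, hn, rfl⟩ := exists_dec C hC
  have h := List.all_eq_true.1 main_search n (List.mem_range.2 hn)
  rw [adq_of hA, cond_true] at h
  obtain ⟨r, hr, s, hs⟩ := srch_spec lv (fun _ h => h) n h
  refine ⟨r, hr, s⁻¹, ?_⟩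
  rw [← hs, Finset.image_image]
  have e : ((fun T : Finset (Fin 5) => T.image (s⁻¹ : Equiv.Perm (Fin 5))) ∘
      fun T : Finset (Fin 5) => T.image s) = id := by
    funext T
    simp [Finset.image_image, Function.comp_def]
  rw [e, Finset.image_id]

theorem J_inv {C C' : Finset (Finset (Fin 5))} (h : R C C') : J C = J C' := by
  obtain ⟨s, rfl⟩ := h
  unfold J
  symm
  rw [← Equiv.sum_comp s (fun x => ∑ y, _)]
  refine Finset.sum_congr rfl fun x _ => ?_
  rw [← Equiv.sum_comp s (fun y => _)]
  refine Finset.sum_congr rfl fun y _ => ?_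
  rw [Finset.filter_image, Finset.card_image_of_injective _ (Finset.image_injective s.injective)]
  simp

theorem reps_ok (i : Fin 16) : (∀ T ∈ dec (reps.get i), T.card = 3) ∧
    Adequate (dec (reps.get i)) := by
  refine ⟨?_, (adequate_iff _).2 (reps_adequate _ (List.get_mem _ _))⟩
  intro T hT
  obtain ⟨k, hk, -, rfl⟩ := mem_dec.1 hT
  exact t_card k hk

end Orb

/-- Orbit equivalence: two adequate collections are related if some permutation
of `Fin 5` maps one to the other. -/
theorem stmt_12 :
    Nat.card (Quot (fun (C C' : {C : Finset (Finset (Fin 5)) //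
        (∀ T ∈ C, T.card = 3) ∧ Adequate C}) =>
      ∃ σ : Equiv.Perm (Fin 5),
        C.1.image (fun T => T.image σ) = C'.1)) = 16 := by
  let r := (fun (C C' : {C : Finset (Finset (Fin 5)) //
        (∀ T ∈ C, T.card = 3) ∧ Adequate C}) =>
      ∃ σ : Equiv.Perm (Fin 5),
        C.1.image (fun T => T.image σ) = C'.1)
  let g : Fin 16 → Quot r := fun i => Quot.mk r ⟨Orb.dec (Orb.reps.get i), Orb.reps_ok i⟩
  let f : Quot r → ℕ := Quot.lift (fun C => Orb.J C.1) (fun _ _ h => Orb.J_inv h)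
  have hg : Function.Bijective g := by
    constructor
    · intro i j hij
      have h : Orb.J (Orb.dec (Orb.reps.get i)) = Orb.J (Orb.dec (Orb.reps.get j)) :=
        congrArg f hij
      have hn := List.pairwise_map.1 Orb.J_nodup
      rw [List.pairwise_iff_get] at hn
      rcases lt_trichotomy i j with hl | hl | hl
      · exact absurd h (hn i j hl)
      · exact hl
      · exact absurd h.symm (hn j i hl)
    · intro q
      induction q using Quot.ind with
      | mk C =>
        obtain ⟨x, hx, hR⟩ := Orb.exists_rep C.1 C.2.1 C.2.2
        obtain ⟨i, rfl⟩ := List.get_of_mem hx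
        exact ⟨i, Quot.sound hR⟩
  have := Nat.card_congr (Equiv.ofBijective g hg)
  rw [Nat.card_fin] at this
  exact this.symm
end

section
/- Let C be a nonempty adequate collection of 3-element subsets of Fin 6 that is not dense. Then there exists a permutation σ of Fin 6 such that the image of C under σ equals either 𝒜 = {{0,2,4},{0,2,5},{0,3,4},{0,3,5},{1,2,4},{1,2,5},{1,3,4},{1,3,5}} or ℬ = {{0,1,3},{0,1,5},{0,2,4},{0,4,5},{0,2,3},{1,2,4},{1,2,5},{1,3,4},{2,3,5},{3,4,5}}. -/
/-- A collection `C` of 3-element subsets of `Fin m` is dense if there are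
distinct `i, j` such that `{i,j,k} ∈ C` for at least `m - 3` elements
`k ∉ {i, j}`. -/
def DenseColl {m : ℕ} (C : Finset (Finset (Fin m))) : Prop :=
  ∃ i j : Fin m, i ≠ j ∧ m - 3 ≤
    (Finset.univ.filter
      (fun k : Fin m => k ≠ i ∧ k ≠ j ∧ ({i, j, k} : Finset (Fin m)) ∈ C)).card

/-- The twenty triples, in an order convenient for the search. -/
def trips : List (Finset (Fin 6)) :=
  [{1,2,4},{0,1,2},{0,1,4},{0,2,4},{0,1,3},{0,2,3},{1,2,3},{1,2,5},{0,2,5},{0,1,5},{0,3,4},{2,3,4},{1,3,4},{2,3,5},{1,3,5},{0,3,5},{0,4,5},{2,4,5},{3,4,5},{1,4,5}]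

/-- Dense clauses by level. -/
def dcl : List (List (ℕ × ℕ × ℕ)) :=
  [[],
   [],
   [],
   [],
   [(1,2,4)],
   [(1,3,5)],
   [(0,1,6)],
   [(1,6,7), (0,1,7), (0,6,7)],
   [(1,5,8), (1,3,8), (3,5,8)],
   [(1,4,9), (1,2,9), (2,4,9)],
   [(4,5,10), (2,3,10)],
   [(5,6,11), (0,3,11)],
   [(4,6,12), (0,2,12), (10,11,12)],
   [(5,6,13), (5,11,13), (6,11,13), (7,8,13)],
   [(4,6,14), (4,12,14), (6,12,14), (7,9,14)],
   [(4,5,15), (4,10,15), (5,10,15), (8,9,15), (13,14,15)],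
   [(2,3,16), (2,10,16), (3,10,16), (8,9,16), (9,15,16), (8,15,16)],
   [(0,3,17), (3,11,17), (0,11,17), (7,8,17), (8,13,17), (7,13,17)],
   [(10,12,18), (10,11,18), (11,12,18), (14,15,18), (13,15,18), (13,14,18), (16,17,18)],
   [(0,2,19), (2,12,19), (0,12,19), (7,9,19), (9,14,19), (7,14,19), (16,17,19), (16,18,19), (17,18,19)]]

/-- Adequacy clauses by level. -/
def acl : List (List (ℕ × ℕ × ℕ × ℕ)) :=
  [[],
   [],
   [],
   [(0,1,2,3), (1,0,2,3), (2,0,1,3), (3,0,1,2)],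
   [],
   [],
   [(1,4,5,6), (4,1,5,6), (5,1,4,6), (6,1,4,5)],
   [],
   [],
   [(1,7,8,9), (7,1,8,9), (8,1,7,9), (9,1,7,8)],
   [],
   [(3,5,10,11), (5,3,10,11), (10,3,5,11), (11,3,5,10)],
   [(0,6,11,12), (2,4,10,12), (4,2,10,12), (6,0,11,12), (10,2,4,12), (11,0,6,12), (12,2,4,10), (12,0,6,11)],
   [],
   [(6,7,13,14), (7,6,13,14), (13,6,7,14), (14,6,7,13)],
   [(4,9,14,15), (5,8,13,15), (8,5,13,15), (9,4,14,15), (13,5,8,15), (14,4,9,15), (15,4,9,14), (15,5,8,13)],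
   [],
   [(3,8,16,17), (8,3,16,17), (16,3,8,17), (17,3,8,16)],
   [(10,15,16,18), (11,13,17,18), (13,11,17,18), (15,10,16,18), (16,10,15,18), (17,11,13,18), (18,10,15,16), (18,11,13,17)],
   [(0,7,17,19), (2,9,16,19), (7,0,17,19), (9,2,16,19), (12,14,18,19), (14,12,18,19), (16,2,9,19), (17,0,7,19), (18,12,14,19), (19,2,9,16), (19,0,7,17), (19,12,14,18)]]

/-- Nonempty solutions, each with a permutation to a standard form. -/
def table : List (ℕ × (Fin 6 → Fin 6)) :=
  [(617747, ![0,1,3,5,4,2]),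
   (430355, ![0,2,4,5,1,3]),
   (226851, ![0,1,3,2,4,5]),
   (821795, ![0,2,4,3,1,5]),
   (346549, ![0,1,2,3,5,4]),
   (237653, ![0,2,1,4,5,3]),
   (411493, ![0,1,2,4,5,3]),
   (44677, ![0,2,1,3,4,5]),
   (340665, ![0,1,2,3,4,5]),
   (796505, ![0,1,2,5,4,3]),
   (639081, ![0,1,2,4,5,3]),
   (54665, ![0,1,2,3,4,5]),
   (795814, ![0,2,4,3,5,1]),
   (252070, ![0,1,3,2,5,4]),
   (707910, ![0,1,3,4,5,2]),
   (340294, ![0,2,4,1,5,3]),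
   (410778, ![0,2,4,5,3,1]),
   (637082, ![0,1,3,5,2,4]),
   (702026, ![0,1,3,4,2,5]),
   (346698, ![0,2,4,1,3,5]),
   (679996, ![0,2,3,4,5,1]),
   (821724, ![0,1,2,5,3,4]),
   (430828, ![0,1,2,4,3,5]),
   (31500, ![0,2,3,1,4,5]),
   (662320, ![0,2,3,4,1,5]),
   (200400, ![0,2,1,4,3,5]),
   (595424, ![0,1,2,4,3,5])]

/-- The `n`-th triple. -/
def trip (n : ℕ) : Finset (Fin 6) := trips.getD n ∅

/-- A dense clause is violated by the bit mask `a`. -/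
def dbad (a : ℕ) (p : ℕ × ℕ × ℕ) : Bool :=
  a.testBit p.1 && a.testBit p.2.1 && a.testBit p.2.2

/-- An adequacy clause is violated by the bit mask `a`. -/
def abad (a : ℕ) (p : ℕ × ℕ × ℕ × ℕ) : Bool :=
  a.testBit p.1 && !a.testBit p.2.1 && !a.testBit p.2.2.1 && !a.testBit p.2.2.2

/-- Depth first search. -/
def search : List (List (ℕ × ℕ × ℕ) × List (ℕ × ℕ × ℕ × ℕ)) → ℕ → ℕ → Bool
  | [], _, a => a == 0 || (table.map Prod.fst).contains a
  | c :: cs, k, a =>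
    (c.1.any (dbad a) || c.2.any (abad a) || search cs (k + 1) a) &&
    (c.1.any (dbad (2 ^ k + a)) || c.2.any (abad (2 ^ k + a)) || search cs (k + 1) (2 ^ k + a))

set_option maxRecDepth 100000 in
theorem search_ok : search (dcl.zip acl) 0 0 = true := by decide +kernel

/-- All indices in level clauses starting from level `k` are bounded. -/
def bounded : List (List (ℕ × ℕ × ℕ) × List (ℕ × ℕ × ℕ × ℕ)) → ℕ → Bool
  | [], _ => true
  | c :: cs, k =>
    c.1.all (fun p => p.1 ≤ k && p.2.1 ≤ k && p.2.2 ≤ k) &&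
    c.2.all (fun p => p.1 ≤ k && p.2.1 ≤ k && p.2.2.1 ≤ k && p.2.2.2 ≤ k) && bounded cs (k + 1)

theorem bounded_ok : bounded (dcl.zip acl) 0 = true := by decide +kernel

theorem search_sound (b : ℕ → Bool) :
    ∀ (cs : List (List (ℕ × ℕ × ℕ) × List (ℕ × ℕ × ℕ × ℕ))) (k a : ℕ),
    search cs k a = true → bounded cs k = true →
    (∀ c ∈ cs, ∀ p ∈ c.1, (b p.1 && b p.2.1 && b p.2.2) = false) →
    (∀ c ∈ cs, ∀ p ∈ c.2, (b p.1 && !b p.2.1 && !b p.2.2.1 && !b p.2.2.2) = false) →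
    a < 2 ^ k → (∀ n < k, a.testBit n = b n) →
    ∃ a', (a' = 0 ∨ a' ∈ table.map Prod.fst) ∧ ∀ n < k + cs.length, a'.testBit n = b n := by
  intro cs
  induction cs with
  | nil =>
    intro k a hs _ _ _ _ hb
    refine ⟨a, ?_, by simpa using hb⟩
    simpa [search] using hs
  | cons c cs ih =>
    intro k a hs hbd hd ha hlt hb
    simp only [bounded, Bool.and_eq_true, List.all_eq_true, decide_eq_true_eq] at hbd
    obtain ⟨⟨hb1, hb2⟩, hb3⟩ := hbd
    -- the step for the extension agreeing with `b`
    have step : ∀ a₁ : ℕ, a₁ < 2 ^ (k + 1) → (∀ n < k + 1, a₁.testBit n = b n) →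
        (c.1.any (dbad a₁) || c.2.any (abad a₁) || search cs (k + 1) a₁) = true →
        ∃ a', (a' = 0 ∨ a' ∈ table.map Prod.fst) ∧
          ∀ n < k + (c :: cs).length, a'.testBit n = b n := by
      intro a₁ hl hbb hor
      have h1 : c.1.any (dbad a₁) = false := by
        rw [List.any_eq_false]
        intro p hp
        have hq := hb1 p hp
        rw [dbad, hbb _ (by omega), hbb _ (by omega), hbb _ (by omega),
          hd c (by simp) p hp]
        simp
      have h2 : c.2.any (abad a₁) = false := by
        rw [List.any_eq_false]
        intro p hp
        have hq := hb2 p hp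
        rw [abad, hbb _ (by omega), hbb _ (by omega), hbb _ (by omega), hbb _ (by omega),
          ha c (by simp) p hp]
        simp
      rw [h1, h2] at hor
      obtain ⟨a', h, h'⟩ := ih (k + 1) a₁ (by simpa using hor) hb3
        (fun c' hc' => hd c' (by simp [hc'])) (fun c' hc' => ha c' (by simp [hc'])) hl hbb
      refine ⟨a', h, fun n hn => h' n ?_⟩
      simp only [List.length_cons] at hn
      omega
    rw [search, Bool.and_eq_true] at hs
    have hpow : 2 ^ (k + 1) = 2 ^ k + 2 ^ k := by rw [pow_succ]; ring
    cases hk : b k with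
    | false =>
      refine step a (by omega) ?_ hs.1
      intro n hn
      rcases Nat.lt_succ_iff_lt_or_eq.mp hn with h | rfl
      · exact hb n h
      · rw [hk]; exact Nat.testBit_lt_two_pow hlt
    | true =>
      refine step (2 ^ k + a) (by omega) ?_ hs.2
      intro n hn
      rcases Nat.lt_succ_iff_lt_or_eq.mp hn with h | rfl
      · rw [Nat.testBit_two_pow_add_gt h]; exact hb n h
      · rw [hk, Nat.testBit_two_pow_add_eq, Nat.testBit_lt_two_pow hlt]; rfl

theorem dcl_ok : ∀ c ∈ dcl.zip acl, ∀ p ∈ c.1,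
    (trip p.1 ∩ trip p.2.1 ∩ trip p.2.2).card = 2 ∧
    (trip p.1 ∪ trip p.2.1 ∪ trip p.2.2).card = 5 := by decide +kernel

theorem acl_ok : ∀ c ∈ dcl.zip acl, ∀ p ∈ c.2,
    ∃ i : Fin 6, ∀ S ∈ (trip p.1).powersetCard 2,
      insert i S = trip p.2.1 ∨ insert i S = trip p.2.2.1 ∨ insert i S = trip p.2.2.2 := by
  decide +kernel

theorem trip_surj : ∀ T : Finset (Fin 6), T.card = 3 → ∃ n < 20, trip n = T := by
  decide +kernel

/-- The collection with bit mask `a`. -/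
def coll (a : ℕ) : Finset (Finset (Fin 6)) :=
  ((Finset.range 20).filter (fun n => a.testBit n = true)).image trip

theorem table_ok : ∀ q ∈ table, (∀ i j, q.2 i = q.2 j → i = j) ∧
    ((coll q.1).image (fun T => T.image q.2) =
        ({{0,2,4},{0,2,5},{0,3,4},{0,3,5},{1,2,4},{1,2,5},{1,3,4},{1,3,5}} :
          Finset (Finset (Fin 6))) ∨
      (coll q.1).image (fun T => T.image q.2) =
        ({{0,1,3},{0,1,5},{0,2,4},{0,4,5},{0,2,3},{1,2,4},{1,2,5},{1,3,4},
          {2,3,5},{3,4,5}} : Finset (Finset (Fin 6)))) := by decide +kernel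

theorem dense_of (C : Finset (Finset (Fin 6))) (h3 : ∀ T ∈ C, T.card = 3)
    (X Y Z : Finset (Fin 6)) (hX : X ∈ C) (hY : Y ∈ C) (hZ : Z ∈ C)
    (hI : (X ∩ Y ∩ Z).card = 2) (hU : (X ∪ Y ∪ Z).card = 5) : DenseColl C := by
  obtain ⟨i, j, hij, hI'⟩ := Finset.card_eq_two.mp hI
  refine ⟨i, j, hij, ?_⟩
  have key : ∀ W ∈ C, ({i, j} : Finset (Fin 6)) ⊆ W → ∀ k ∈ W, k ≠ i → k ≠ j →
      ({i, j, k} : Finset (Fin 6)) ∈ C := by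
    intro W hW hs k hk hki hkj
    have : ({i, j, k} : Finset (Fin 6)) = W := by
      apply Finset.eq_of_subset_of_card_le
      · intro x hx
        simp only [Finset.mem_insert, Finset.mem_singleton] at hx
        rcases hx with rfl | rfl | rfl
        · exact hs (by simp)
        · exact hs (by simp)
        · exact hk
      · rw [h3 W hW, Finset.card_eq_three.mpr ⟨i, j, k, hij, hki.symm, hkj.symm, rfl⟩]
    rwa [this]
  have hsub : ((X ∪ Y ∪ Z) \ (X ∩ Y ∩ Z)) ⊆ (Finset.univ.filter
      (fun k : Fin 6 => k ≠ i ∧ k ≠ j ∧ ({i, j, k} : Finset (Fin 6)) ∈ C)) := by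
    intro k hk
    rw [hI'] at hk
    simp only [Finset.mem_sdiff, Finset.mem_union, Finset.mem_insert, Finset.mem_singleton,
      not_or] at hk
    obtain ⟨hk, hki, hkj⟩ := hk
    simp only [Finset.mem_filter, Finset.mem_univ, true_and]
    refine ⟨hki, hkj, ?_⟩
    rcases hk with (hk | hk) | hk
    · exact key X hX (hI' ▸ fun x hx => by simp at hx; tauto) k hk hki hkj
    · exact key Y hY (hI' ▸ fun x hx => by simp at hx; tauto) k hk hki hkj
    · exact key Z hZ (hI' ▸ fun x hx => by simp at hx; tauto) k hk hki hkj
  have hc := Finset.card_le_card hsub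
  have hle := Finset.le_card_sdiff (X ∩ Y ∩ Z) (X ∪ Y ∪ Z)
  omega


theorem stmt_14 (C : Finset (Finset (Fin 6))) (h3 : ∀ T ∈ C, T.card = 3)
    (hne : C.Nonempty) (hC : Adequate C) (hnd : ¬ DenseColl C) :
    ∃ σ : Equiv.Perm (Fin 6),
      C.image (fun T => T.image σ) =
        ({{0,2,4},{0,2,5},{0,3,4},{0,3,5},{1,2,4},{1,2,5},{1,3,4},{1,3,5}} :
          Finset (Finset (Fin 6))) ∨
      C.image (fun T => T.image σ) =
        ({{0,1,3},{0,1,5},{0,2,4},{0,4,5},{0,2,3},{1,2,4},{1,2,5},{1,3,4},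
          {2,3,5},{3,4,5}} : Finset (Finset (Fin 6))) := by
  obtain ⟨a, ha, hbit⟩ := search_sound (fun n => decide (trip n ∈ C)) (dcl.zip acl) 0 0
    search_ok bounded_ok
    (by
      intro c hc p hp
      obtain ⟨h1, h2⟩ := dcl_ok c hc p hp
      by_contra hcon
      simp only [Bool.not_eq_false, Bool.and_eq_true, decide_eq_true_eq] at hcon
      exact hnd (dense_of C h3 _ _ _ hcon.1.1 hcon.1.2 hcon.2 h1 h2))
    (by
      intro c hc p hp
      obtain ⟨i, hi⟩ := acl_ok c hc p hp
      by_contra hcon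
      simp only [Bool.not_eq_false, Bool.and_eq_true, decide_eq_true_eq, Bool.not_eq_true',
        decide_eq_false_iff_not] at hcon
      obtain ⟨⟨⟨hT, n1⟩, n2⟩, n3⟩ := hcon
      obtain ⟨S, hS, hS2, -, hin⟩ := hC i _ hT
      rcases hi S (Finset.mem_powersetCard.mpr ⟨hS, hS2⟩) with h | h | h
      · exact n1 (h ▸ hin)
      · exact n2 (h ▸ hin)
      · exact n3 (h ▸ hin))
    (by norm_num) (by intro n hn; omega)
  have hlen : (dcl.zip acl).length = 20 := by decide
  rw [hlen, Nat.zero_add] at hbit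
  have hcoll : C = coll a := by
    ext T
    simp only [coll, Finset.mem_image, Finset.mem_filter, Finset.mem_range]
    constructor
    · intro hT
      obtain ⟨n, hn, rfl⟩ := trip_surj T (h3 T hT)
      exact ⟨n, ⟨hn, by rw [hbit n hn]; simpa using hT⟩, rfl⟩
    · rintro ⟨n, ⟨hn, hb⟩, rfl⟩
      rw [hbit n hn] at hb
      simpa using hb
  rcases ha with rfl | ha
  · rw [hcoll] at hne
    simp [coll] at hne
  · obtain ⟨q, hq, rfl⟩ := List.mem_map.mp ha
    obtain ⟨hinj, h⟩ := table_ok q hq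
    have hbij : Function.Bijective q.2 :=
      Finite.injective_iff_bijective.mp (fun i j hij => hinj i j hij)
    refine ⟨Equiv.ofBijective q.2 hbij, ?_⟩
    rw [hcoll]
    exact h
end
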